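/- arXiv:2204.11282 — 14 statements merged into one kernel-verified Lean document; each statement's English description precedes it below -/
import Mathlib

section
/- (Monotonicity) Let e : ℝ → ℝ be an entrance fee function, let x₁ ≤ x₂ be reals, and let ℓ₁ be an optimal location for x₁ and ℓ₂ an optimal location for x₂. Then min(ℓ₁, ℓ₂) is also an optimal location for x₁ and max(ℓ₁, ℓ₂) is also an optimal location for x₂. In particular, optimal locations can always be chosen in a monotone (nondecreasing) fashion. -/
/-- Cost of an agent at `x` using a facility at `ℓ` under entrance fee function `e`. -/
noncomputable def cost (e : ℝ → ℝ) (x ℓ : ℝ) : ℝ := |x - ℓ| + e ℓ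

/-- Monotonicity: if `x₁ ≤ x₂`, `ℓ₁` is optimal for `x₁` and `ℓ₂` is optimal for `x₂`,
then `min ℓ₁ ℓ₂` is optimal for `x₁` and `max ℓ₁ ℓ₂` is optimal for `x₂`. -/
theorem opt_loc_monotone (e : ℝ → ℝ) (he : ∀ ℓ, 0 ≤ e ℓ) (x₁ x₂ ℓ₁ ℓ₂ : ℝ)
    (hx : x₁ ≤ x₂)
    (h1 : ∀ ℓ, cost e x₁ ℓ₁ ≤ cost e x₁ ℓ)
    (h2 : ∀ ℓ, cost e x₂ ℓ₂ ≤ cost e x₂ ℓ) :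
    (∀ ℓ, cost e x₁ (min ℓ₁ ℓ₂) ≤ cost e x₁ ℓ) ∧
    (∀ ℓ, cost e x₂ (max ℓ₁ ℓ₂) ≤ cost e x₂ ℓ) := by
  rcases le_total ℓ₁ ℓ₂ with h | h
  · rw [min_eq_left h, max_eq_right h]
    exact ⟨h1, h2⟩
  · rw [min_eq_right h, max_eq_left h]
    -- The Monge inequality for `|x - ℓ|`: uncrossing the two assignments does not increase
    -- the total distance. Hence neither optimality inequality can be strict after the swap.
    have key : |x₁ - ℓ₂| + |x₂ - ℓ₁| ≤ |x₁ - ℓ₁| + |x₂ - ℓ₂| := by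
      grind
    have a := h1 ℓ₂
    have b := h2 ℓ₁
    refine ⟨fun ℓ => le_trans ?_ (h1 ℓ), fun ℓ => le_trans ?_ (h2 ℓ)⟩ <;>
      unfold cost at * <;> linarith
end

section
/- Let e : ℝ → ℝ be an entrance fee function and suppose x₁ < x₂ ≤ ℓ₁ < ℓ₂, where ℓ₁ is an optimal location for x₁ and ℓ₂ is an optimal location for x₂. Then |x₁ − ℓ₁| + e(ℓ₁) = |x₁ − ℓ₂| + e(ℓ₂); in other words, ℓ₂ is also an optimal location for x₁ (the open intervals between an agent and her optimal location can only overlap if the two agents share a common optimal location). -/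
/-- If `x₁ < x₂ ≤ ℓ₁ < ℓ₂`, where `ℓ₁` is optimal for `x₁` and `ℓ₂` is optimal for `x₂`,
then `ℓ₂` is also an optimal location for `x₁`: `cost x₁ ℓ₁ = cost x₁ ℓ₂`. -/
theorem overlapping_intervals_share_opt (e : ℝ → ℝ) (he : ∀ ℓ, 0 ≤ e ℓ)
    (x₁ x₂ ℓ₁ ℓ₂ : ℝ)
    (h12 : x₁ < x₂) (h2l : x₂ ≤ ℓ₁) (hll : ℓ₁ < ℓ₂)
    (h1 : ∀ ℓ, cost e x₁ ℓ₁ ≤ cost e x₁ ℓ)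
    (h2 : ∀ ℓ, cost e x₂ ℓ₂ ≤ cost e x₂ ℓ) :
    cost e x₁ ℓ₁ = cost e x₁ ℓ₂ := by
  -- Both facilities lie to the right of both agents, so moving the agent from `x₁` to `x₂`
  -- lowers both costs by the same amount `x₂ - x₁`, and `ℓ₂` stays at least as good as `ℓ₁`.
  refine le_antisymm (h1 ℓ₂) ?_
  have h := h2 ℓ₁
  unfold cost at h ⊢
  rw [abs_of_nonpos (by linarith), abs_of_nonpos (by linarith)] at h ⊢
  linarith
end

section
/- Let e : ℝ → ℝ be an entrance fee function, let x₁ ≤ x₂ ≤ x₃ be reals, and let ℓ₁ ≤ ℓ₂ ≤ ℓ₃ be such that ℓⱼ is an optimal location for xⱼ for j = 1, 2, 3. Then cost(x₁, ℓ₁) ≤ cost(x₁, ℓ₂) ≤ cost(x₁, ℓ₃) and cost(x₃, ℓ₃) ≤ cost(x₃, ℓ₂) ≤ cost(x₃, ℓ₁). -/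
/-- The Monge (submodularity) inequality for the distance on the line: matching ordered points in
order is cheapest. Adding `e a + e b` to both sides transfers it to `cost e`, and optimality of one
location for one of the two agents then compares the other agent's costs. -/
lemma abs_sub_add_abs_sub_le_swap {x y a b : ℝ} (hxy : x ≤ y) (hab : a ≤ b) :
    |x - a| + |y - b| ≤ |x - b| + |y - a| := by
  rcases abs_cases (x - a) with h | h <;> rcases abs_cases (y - b) with h' | h' <;>
    rcases abs_cases (x - b) with k | k <;> rcases abs_cases (y - a) with k' | k' <;> linarith

/-- For `x₁ ≤ x₂ ≤ x₃` with monotone optimal locations `ℓ₁ ≤ ℓ₂ ≤ ℓ₃`,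
the cost of the extreme agents is monotone in the chosen optimal location. -/
theorem cost_triple_monotone (e : ℝ → ℝ) (he : ∀ ℓ, 0 ≤ e ℓ)
    (x₁ x₂ x₃ ℓ₁ ℓ₂ ℓ₃ : ℝ)
    (hx12 : x₁ ≤ x₂) (hx23 : x₂ ≤ x₃)
    (hl12 : ℓ₁ ≤ ℓ₂) (hl23 : ℓ₂ ≤ ℓ₃)
    (h1 : ∀ ℓ, cost e x₁ ℓ₁ ≤ cost e x₁ ℓ)
    (h2 : ∀ ℓ, cost e x₂ ℓ₂ ≤ cost e x₂ ℓ)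
    (h3 : ∀ ℓ, cost e x₃ ℓ₃ ≤ cost e x₃ ℓ) :
    cost e x₁ ℓ₁ ≤ cost e x₁ ℓ₂ ∧ cost e x₁ ℓ₂ ≤ cost e x₁ ℓ₃ ∧
    cost e x₃ ℓ₃ ≤ cost e x₃ ℓ₂ ∧ cost e x₃ ℓ₂ ≤ cost e x₃ ℓ₁ := by
  have low := abs_sub_add_abs_sub_le_swap hx12 hl23
  have high := abs_sub_add_abs_sub_le_swap hx23 hl12
  have h23 := h2 ℓ₃
  have h21 := h2 ℓ₁
  refine ⟨h1 ℓ₂, ?_, h3 ℓ₂, ?_⟩ <;> unfold cost at * <;> linarith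
end

section
/- (Domination) Let e : ℝ → ℝ be an entrance fee function, let x ∈ ℝ, and let ℓ* be an optimal location for x. Then for every location ℓ lying in the closed interval between x and ℓ* (i.e., min(x, ℓ*) ≤ ℓ ≤ max(x, ℓ*)) and for every y ∈ ℝ, we have cost(y, ℓ*) ≤ cost(y, ℓ); that is, ℓ* dominates every location between x and ℓ*. -/
/-- Domination: an optimal location `ℓ*` for `x` dominates every location
in the closed interval between `x` and `ℓ*`. -/
theorem opt_loc_dominates (e : ℝ → ℝ) (he : ∀ ℓ, 0 ≤ e ℓ) (x ℓstar : ℝ)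
    (hopt : ∀ ℓ, cost e x ℓstar ≤ cost e x ℓ) :
    ∀ ℓ, min x ℓstar ≤ ℓ → ℓ ≤ max x ℓstar →
      ∀ y : ℝ, cost e y ℓstar ≤ cost e y ℓ := by
  intro ℓ h₁ h₂ y
  have hx : |x - ℓstar| = |x - ℓ| + |ℓ - ℓstar| := by
    rcases le_total x ℓstar with h | h
    · rw [min_eq_left h] at h₁
      rw [max_eq_right h] at h₂
      rw [abs_of_nonpos (by linarith), abs_of_nonpos (by linarith), abs_of_nonpos (by linarith)]
      ring
    · rw [min_eq_right h] at h₁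
      rw [max_eq_left h] at h₂
      rw [abs_of_nonneg (by linarith), abs_of_nonneg (by linarith), abs_of_nonneg (by linarith)]
      ring
  have hℓ := hopt ℓ
  have hy := abs_sub_le y ℓ ℓstar
  unfold cost at hℓ ⊢
  linarith
end

section
/- Let e : ℝ → ℝ be an entrance fee function, let x : Fin n → ℝ be a nondecreasing profile of n ≥ 1 agent positions, let ℓ₁* be an optimal location for the leftmost agent x₁ and ℓₙ* an optimal location for the rightmost agent xₙ. Then for every ℓ ≤ ℓ₁* one has TC(x, ℓ₁*) ≤ TC(x, ℓ) and MC(x, ℓ₁*) ≤ MC(x, ℓ), and for every ℓ ≥ ℓₙ* one has TC(x, ℓₙ*) ≤ TC(x, ℓ) and MC(x, ℓₙ*) ≤ MC(x, ℓ). Consequently, any minimizer of the total cost and of the maximum cost may be taken in the interval [ℓ₁*, ℓₙ*]. -/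
/-- Total cost of a profile of agents for a facility at `ℓ`. -/
noncomputable def totalCost (e : ℝ → ℝ) {n : ℕ} (x : Fin n → ℝ) (ℓ : ℝ) : ℝ :=
  ∑ i, cost e (x i) ℓ

/-- Maximum cost of a (nonempty) profile of agents for a facility at `ℓ`. -/
noncomputable def MC (e : ℝ → ℝ) {n : ℕ} (x : Fin (n + 1) → ℝ) (ℓ : ℝ) : ℝ :=
  Finset.univ.sup' Finset.univ_nonempty (fun i => cost e (x i) ℓ)

/-- A weak preference for the right one of two locations passes to every agent further right. -/
lemma cost_le_of_left (e : ℝ → ℝ) {a y ℓ ℓ' : ℝ} (hay : a ≤ y) (hl : ℓ ≤ ℓ')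
    (h : cost e a ℓ' ≤ cost e a ℓ) : cost e y ℓ' ≤ cost e y ℓ := by
  unfold cost at *
  cases abs_cases (a - ℓ') <;> cases abs_cases (a - ℓ) <;>
    cases abs_cases (y - ℓ') <;> cases abs_cases (y - ℓ) <;> linarith

/-- A weak preference for the left one of two locations passes to every agent further left. -/
lemma cost_le_of_right (e : ℝ → ℝ) {a y ℓ ℓ' : ℝ} (hay : y ≤ a) (hl : ℓ' ≤ ℓ)
    (h : cost e a ℓ' ≤ cost e a ℓ) : cost e y ℓ' ≤ cost e y ℓ := by
  unfold cost at *
  cases abs_cases (a - ℓ') <;> cases abs_cases (a - ℓ) <;>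
    cases abs_cases (y - ℓ') <;> cases abs_cases (y - ℓ) <;> linarith

lemma totalCost_le_and_MC_le (e : ℝ → ℝ) {n : ℕ} (x : Fin (n + 1) → ℝ) {ℓ ℓ' : ℝ}
    (h : ∀ i, cost e (x i) ℓ' ≤ cost e (x i) ℓ) :
    totalCost e x ℓ' ≤ totalCost e x ℓ ∧ MC e x ℓ' ≤ MC e x ℓ :=
  ⟨Finset.sum_le_sum fun i _ => h i, Finset.sup'_mono_fun fun i _ => h i⟩

/-- Any minimizer of the total cost and of the maximum cost may be taken in the
interval `[ℓ₁*, ℓₙ*]` between the optimal locations of the extreme agents. -/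
theorem opt_in_interval (e : ℝ → ℝ) (he : ∀ ℓ, 0 ≤ e ℓ)
    (n : ℕ) (x : Fin (n + 1) → ℝ) (hx : Monotone x) (ℓ₁ ℓₙ : ℝ)
    (hopt1 : ∀ ℓ, cost e (x 0) ℓ₁ ≤ cost e (x 0) ℓ)
    (hoptn : ∀ ℓ, cost e (x (Fin.last n)) ℓₙ ≤ cost e (x (Fin.last n)) ℓ) :
    (∀ ℓ, ℓ ≤ ℓ₁ → totalCost e x ℓ₁ ≤ totalCost e x ℓ ∧ MC e x ℓ₁ ≤ MC e x ℓ) ∧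
    (∀ ℓ, ℓₙ ≤ ℓ → totalCost e x ℓₙ ≤ totalCost e x ℓ ∧ MC e x ℓₙ ≤ MC e x ℓ) := by
  exact ⟨fun ℓ hl => totalCost_le_and_MC_le e x fun i =>
      cost_le_of_left e (hx (Fin.zero_le i)) hl (hopt1 ℓ),
    fun ℓ hl => totalCost_le_and_MC_le e x fun i =>
      cost_le_of_right e (hx (Fin.le_last i)) hl (hoptn ℓ)⟩
end

section
/- Let e : ℝ → ℝ be an entrance fee function and let ℓ₁, ℓ₂ ∈ ℝ be two facility locations. If x_p ≤ x_q ≤ x_r are agent positions such that cost(x_p, ℓ₁) ≤ cost(x_p, ℓ₂) and cost(x_r, ℓ₁) ≤ cost(x_r, ℓ₂), then cost(x_q, ℓ₁) ≤ cost(x_q, ℓ₂). Consequently, for any finite set of facilities, if two agents both (weakly) prefer the same facility over every other facility, then every agent located between them also (weakly) prefers that facility. -/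
/-- For `a ≤ b`, the difference of distances `|x - a| - |x - b|` is nondecreasing in `x`:
it is constant outside `[a, b]` and has slope `2` inside. -/
lemma monotone_abs_sub_sub_abs_sub {a b : ℝ} (hab : a ≤ b) :
    Monotone fun x : ℝ => |x - a| - |x - b| := by
  intro x y hxy
  dsimp only
  rcases abs_cases (x - a) with h1 | h1 <;> rcases abs_cases (x - b) with h2 | h2 <;>
    rcases abs_cases (y - a) with h3 | h3 <;> rcases abs_cases (y - b) with h4 | h4 <;>
    linarith

/-- If two agents both (weakly) prefer facility `ℓ₁` over `ℓ₂`, then every agent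
located between them also (weakly) prefers `ℓ₁`. -/
theorem between_prefers_same (e : ℝ → ℝ) (he : ∀ ℓ, 0 ≤ e ℓ)
    (ℓ₁ ℓ₂ xp xq xr : ℝ) (hpq : xp ≤ xq) (hqr : xq ≤ xr)
    (hp : cost e xp ℓ₁ ≤ cost e xp ℓ₂)
    (hr : cost e xr ℓ₁ ≤ cost e xr ℓ₂) :
    cost e xq ℓ₁ ≤ cost e xq ℓ₂ := by
  unfold cost at *
  -- The cost difference is monotone in the agent's position, so the agent at `xq` inherits
  -- the preference of `xr` when `ℓ₁ ≤ ℓ₂`, and that of `xp` when `ℓ₂ ≤ ℓ₁`.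
  rcases le_total ℓ₁ ℓ₂ with h | h
  · have := monotone_abs_sub_sub_abs_sub h hqr
    dsimp only at this
    linarith
  · have := monotone_abs_sub_sub_abs_sub h hpq
    dsimp only at this
    linarith
end

section
/- (Group strategyproofness of mₖ) Let e : ℝ → ℝ be an entrance fee function and let opt : ℝ → ℝ be a monotone (nondecreasing) map such that for every x ∈ ℝ, opt(x) is an optimal location for x. Fix n ≥ 1 and an index k with 1 ≤ k ≤ n, and define the deterministic mechanism f : ℝⁿ → ℝ by f(y) = opt(y₍ₖ₎), where y₍ₖ₎ denotes the k-th smallest coordinate of the reported profile y. Then f is group strategyproof: for every true profile y, every nonempty coalition S of agents, and every reported profile y' that agrees with y on all agents outside S, there exists an agent i ∈ S with cost(y_i, f(y)) ≤ cost(y_i, f(y')). -/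
/-- Two permutations of `Fin n`, read as rankings: among the `k + 1` elements that `σ` places at
positions up to `k`, one is placed by `τ` at a position at least `k`, since only `k` positions
lie strictly below `k`. -/
lemma exists_perm_le_and_le {n : ℕ} (σ τ : Equiv.Perm (Fin n)) (k : Fin n) :
    ∃ j l : Fin n, j ≤ k ∧ k ≤ l ∧ σ j = τ l := by
  by_contra! h
  have hmaps : ∀ j ∈ Finset.Iic k, τ.symm (σ j) ∈ Finset.Iio k := by
    intro j hj
    rw [Finset.mem_Iio]
    by_contra! hle
    exact h j (τ.symm (σ j)) (Finset.mem_Iic.1 hj) hle (by simp)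
  have hcard := Finset.card_le_card_of_injOn (fun j => τ.symm (σ j)) hmaps
    ((τ.symm.injective.comp σ.injective).injOn)
  rw [Fin.card_Iic, Fin.card_Iio] at hcard
  omega

/-- Some agent lies weakly below the `k`-th smallest value of `u` and weakly above the `k`-th
smallest value of `v`. -/
lemma exists_le_sort_and_sort_le {n : ℕ} (u v : Fin n → ℝ) (k : Fin n) :
    ∃ i, u i ≤ u (Tuple.sort u k) ∧ v (Tuple.sort v k) ≤ v i := by
  obtain ⟨j, l, hj, hl, h⟩ := exists_perm_le_and_le (Tuple.sort u) (Tuple.sort v) k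
  refine ⟨Tuple.sort u j, Tuple.monotone_sort u hj, ?_⟩
  rw [h]
  exact Tuple.monotone_sort v hl

/-- The advantage of the left location `a` over the right location `b` shrinks as the agent moves
to the right. -/
lemma abs_sub_single_crossing {a b x m : ℝ} (hab : a ≤ b) (hxm : x ≤ m) :
    |m - b| - |m - a| ≤ |x - b| - |x - a| := by
  rcases abs_cases (m - b) with h1 | h1 <;> rcases abs_cases (m - a) with h2 | h2 <;>
    rcases abs_cases (x - b) with h3 | h3 <;> rcases abs_cases (x - a) with h4 | h4 <;> linarith

/-- Group strategyproofness of the mechanism `m_k` that outputs a (monotonically chosen)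
optimal location for the agent with the `k`-th smallest reported position. -/
theorem mk_group_strategyproof (e : ℝ → ℝ) (he : ∀ ℓ, 0 ≤ e ℓ)
    (opt : ℝ → ℝ) (hmono : Monotone opt)
    (hopt : ∀ x ℓ, cost e x (opt x) ≤ cost e x ℓ)
    (n : ℕ) (k : Fin n)
    (y y' : Fin n → ℝ) (S : Finset (Fin n)) (hS : S.Nonempty)
    (hagree : ∀ i ∉ S, y' i = y i) :
    ∃ i ∈ S,
      cost e (y i) (opt (y (Tuple.sort y k))) ≤
      cost e (y i) (opt (y' (Tuple.sort y' k))) := by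
  set m := y (Tuple.sort y k) with hm
  set m' := y' (Tuple.sort y' k) with hm'
  have hopt_m := hopt m (opt m')
  rcases lt_trichotomy m m' with hlt | heq | hlt
  · obtain ⟨i, hi, hi'⟩ := exists_le_sort_and_sort_le y y' k
    refine ⟨i, ?_, ?_⟩
    · by_contra hiS
      have := hagree i hiS
      linarith
    · have := abs_sub_single_crossing (hmono hlt.le) hi
      unfold cost at *
      linarith
  · obtain ⟨i, hi⟩ := hS
    exact ⟨i, hi, by rw [heq]⟩
  · obtain ⟨i, hi', hi⟩ := exists_le_sort_and_sort_le y' y k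
    refine ⟨i, ?_, ?_⟩
    · by_contra hiS
      have := hagree i hiS
      linarith
    · have := abs_sub_single_crossing (hmono hlt.le) hi
      unfold cost at *
      linarith
end

section
/- (Approximation ratio of the median-optimal-location mechanism for total cost) Let e : ℝ → ℝ be an entrance fee function, and suppose there exist reals 0 < m ≤ M with m ≤ e(ℓ) ≤ M for all ℓ ∈ ℝ. Let x : Fin n → ℝ be a nondecreasing profile of n ≥ 1 agent positions, let med = ⌈n/2⌉ be the median index, and let ℓ_med be an optimal location for the median agent x_med. Then for every location ℓ ∈ ℝ, TC(x, ℓ_med) ≤ (3 − 4/(M/m + 1)) · TC(x, ℓ); in particular TC(x, ℓ_med) ≤ 3 · TC(x, ℓ). -/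
/-- Two agents on opposite sides of an agent `p`, served at a location optimal for `p`, satisfy the
approximation ratio `(3M - m)/(M + m)` (here with denominators cleared). -/
lemma pair_bound (e : ℝ → ℝ) (m M : ℝ) (hm : 0 < m) (hmM : m ≤ M)
    (he : ∀ ℓ, m ≤ e ℓ ∧ e ℓ ≤ M) {a p b s : ℝ} (hap : a ≤ p) (hpb : p ≤ b)
    (hopt : ∀ ℓ, cost e p s ≤ cost e p ℓ) (ℓ : ℝ) :
    (M + m) * (cost e a s + cost e b s) ≤ (3 * M - m) * (cost e a ℓ + cost e b ℓ) := by
  have hpl := hopt ℓ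
  have hpp := hopt p
  simp only [cost, sub_self, abs_zero, zero_add] at *
  have hM := (he p).2
  have hl := (he ℓ).1
  have h1 : |a - s| ≤ (p - a) + |p - s| := by
    have := abs_sub_le a p s
    rwa [abs_sub_comm a p, abs_of_nonneg (sub_nonneg.2 hap)] at this
  have h2 : |b - s| ≤ (b - p) + |p - s| := by
    have := abs_sub_le b p s
    rwa [abs_of_nonneg (sub_nonneg.2 hpb)] at this
  -- Twice the distance from `p` to `ℓ`, reaching `ℓ` from whichever of `a`, `b` is farther away.
  have h3 : 2 * |p - ℓ| ≤ (b - a) + (|a - ℓ| + |b - ℓ|) := by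
    rcases abs_cases (p - ℓ) with h | h <;> rcases abs_cases (a - ℓ) with h' | h' <;>
      rcases abs_cases (b - ℓ) with h'' | h'' <;> linarith
  have h4 : b - a ≤ |a - ℓ| + |b - ℓ| := by
    linarith [neg_abs_le (a - ℓ), le_abs_self (b - ℓ)]
  set C := |p - s| + e s with hC
  set E := (|a - ℓ| + |b - ℓ| - (b - a)) / 2 + e ℓ with hE
  have hmE : m ≤ E := by linarith
  have hCE : C ≤ (b - a) + E := by linarith
  have hCM : C ≤ M := hpp.trans hM
  have hlhs : |a - s| + e s + (|b - s| + e s) ≤ (b - a) + 2 * C := by linarith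
  have hrhs : |a - ℓ| + e ℓ + (|b - ℓ| + e ℓ) = (b - a) + 2 * E := by rw [hE]; ring
  rw [hrhs]
  have k0 := mul_le_mul_of_nonneg_left hlhs (by linarith : 0 ≤ M + m)
  have k1 := mul_le_mul_of_nonneg_left hCE (sub_nonneg.2 hmM)
  have k2 := mul_le_mul_of_nonneg_left hCM hm.le
  have k3 := mul_le_mul_of_nonneg_left hmE (hm.le.trans hmM)
  linarith

/-- The mechanism placing the facility at an optimal location for the median agent
is a `(3 - 4/(M/m + 1))`-approximation (hence a `3`-approximation) for the total cost.
Here there are `n + 1` agents and the median index `⌈(n+1)/2⌉` is `n / 2` in `Fin (n+1)`. -/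
theorem median_mechanism_total_cost_ratio (e : ℝ → ℝ) (m M : ℝ)
    (hm : 0 < m) (hmM : m ≤ M) (he : ∀ ℓ, m ≤ e ℓ ∧ e ℓ ≤ M)
    (n : ℕ) (x : Fin (n + 1) → ℝ) (hx : Monotone x)
    (ℓmed : ℝ)
    (hopt : ∀ ℓ, cost e (x ⟨n / 2, by omega⟩) ℓmed ≤ cost e (x ⟨n / 2, by omega⟩) ℓ) :
    ∀ ℓ : ℝ, totalCost e x ℓmed ≤ (3 - 4 / (M / m + 1)) * totalCost e x ℓ ∧
      totalCost e x ℓmed ≤ 3 * totalCost e x ℓ := by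
  intro ℓ
  have hM : 0 < M := hm.trans_le hmM
  have hρ : 3 - 4 / (M / m + 1) = (3 * M - m) / (M + m) := by
    have : M / m + 1 = (M + m) / m := by field_simp
    rw [this]
    field_simp
    ring
  have hpair : ∀ i : Fin (n + 1),
      (M + m) * (cost e (x i) ℓmed + cost e (x i.rev) ℓmed) ≤
        (3 * M - m) * (cost e (x i) ℓ + cost e (x i.rev) ℓ) := by
    intro i
    have hrev : (i.rev : ℕ) = n - i := by rw [Fin.val_rev]; omega
    rcases le_or_gt (i : ℕ) (n / 2) with h | h
    · exact pair_bound e m M hm hmM he (hx (Fin.le_def.2 h))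
        (hx (Fin.le_def.2 (by simp only [hrev]; omega))) hopt ℓ
    · rw [add_comm (cost e (x i) ℓmed), add_comm (cost e (x i) ℓ)]
      exact pair_bound e m M hm hmM he (hx (Fin.le_def.2 (by simp only [hrev]; omega)))
        (hx (Fin.le_def.2 h.le)) hopt ℓ
  have hsum := Finset.sum_le_sum fun i (_ : i ∈ Finset.univ) => hpair i
  have hreflect (l : ℝ) : ∑ i : Fin (n + 1), cost e (x i.rev) l = totalCost e x l :=
    Equiv.sum_comp Fin.revPerm fun i => cost e (x i) l
  simp only [← Finset.mul_sum, Finset.sum_add_distrib, hreflect] at hsum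
  change (M + m) * (totalCost e x ℓmed + totalCost e x ℓmed) ≤
    (3 * M - m) * (totalCost e x ℓ + totalCost e x ℓ) at hsum
  have hmain : totalCost e x ℓmed ≤ (3 - 4 / (M / m + 1)) * totalCost e x ℓ := by
    rw [hρ, div_mul_eq_mul_div, le_div_iff₀ (by linarith)]
    linarith
  have hnonneg : 0 ≤ totalCost e x ℓ :=
    Finset.sum_nonneg fun i _ => add_nonneg (abs_nonneg _) (hm.le.trans (he ℓ).1)
  refine ⟨hmain, hmain.trans (mul_le_mul_of_nonneg_right ?_ hnonneg)⟩
  have : 0 ≤ 4 / (M / m + 1) := by positivity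
  linarith
end

section
/- (Deterministic lower bound for total cost) Let d > 0 and define the entrance fee function e by e(ℓ) = d for ℓ ∈ {−1, 1} and e(ℓ) = d + 1 otherwise. Let f : ℝ² → ℝ be any deterministic mechanism for two agents that is strategyproof with respect to e. Then for every ε ∈ (0, 1) there exists a profile x ∈ ℝ² such that TC(x, f(x)) ≥ ((2d + 3 − ε)/(2d + 1 + ε)) · inf_{ℓ ∈ ℝ} TC(x, ℓ). In particular, no strategyproof mechanism achieves a total cost approximation ratio below 3 − 4/(r_e + 1), where r_e = (d+1)/d. -/
/-- For an agent at `δ > 0`, the location `1` is the only one that can cost at most `d + 1 - δ`. -/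
lemma eq_one_of_cost_le {d : ℝ} {e : ℝ → ℝ}
    (hdef : ∀ ℓ, e ℓ = if ℓ = -1 ∨ ℓ = 1 then d else d + 1) {δ ℓ : ℝ} (hδ : 0 < δ)
    (h : cost e δ ℓ ≤ d + 1 - δ) : ℓ = 1 := by
  by_contra hne
  unfold cost at h
  rw [hdef] at h
  split_ifs at h with h1
  · obtain rfl : ℓ = -1 := by tauto
    linarith [le_abs_self (δ - -1)]
  · linarith [abs_nonneg (δ - ℓ)]

/-- For an agent at `-δ < 0`, the location `-1` is the only one that can cost at most `d + 1 - δ`. -/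
lemma eq_neg_one_of_cost_le {d : ℝ} {e : ℝ → ℝ}
    (hdef : ∀ ℓ, e ℓ = if ℓ = -1 ∨ ℓ = 1 then d else d + 1) {δ ℓ : ℝ} (hδ : 0 < δ)
    (h : cost e (-δ) ℓ ≤ d + 1 - δ) : ℓ = -1 := by
  by_contra hne
  unfold cost at h
  rw [hdef] at h
  split_ifs at h with h1
  · obtain rfl : ℓ = 1 := by tauto
    linarith [neg_le_abs (-δ - 1)]
  · linarith [abs_nonneg (-δ - ℓ)]

/-- A profile witnesses the bound once some location `m` costs at most `2d + 1 + ε` and the chosen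
location `ℓ` costs at least `2d + 3 - ε`. -/
lemma ratio_mul_iInf_le {d : ℝ} (hd : 0 < d) {e : ℝ → ℝ} (he : ∀ ℓ, 0 ≤ e ℓ) {ε : ℝ}
    (hε0 : 0 < ε) (hε1 : ε < 1) {x : Fin 2 → ℝ} {m ℓ : ℝ}
    (hm : totalCost e x m ≤ 2 * d + 1 + ε) (hℓ : 2 * d + 3 - ε ≤ totalCost e x ℓ) :
    (2 * d + 3 - ε) / (2 * d + 1 + ε) * (⨅ ℓ : ℝ, totalCost e x ℓ) ≤ totalCost e x ℓ := by
  have hbdd : BddBelow (Set.range fun ℓ : ℝ => totalCost e x ℓ) := by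
    refine ⟨0, ?_⟩
    rintro _ ⟨k, rfl⟩
    exact Finset.sum_nonneg fun i _ => add_nonneg (abs_nonneg _) (he k)
  have hinf : (⨅ ℓ : ℝ, totalCost e x ℓ) ≤ 2 * d + 1 + ε := (ciInf_le hbdd m).trans hm
  have hpos : 0 < 2 * d + 1 + ε := by linarith
  have hr : 0 ≤ (2 * d + 3 - ε) / (2 * d + 1 + ε) := div_nonneg (by linarith) hpos.le
  calc _ ≤ (2 * d + 3 - ε) / (2 * d + 1 + ε) * (2 * d + 1 + ε) := by gcongr
    _ = 2 * d + 3 - ε := div_mul_cancel₀ _ hpos.ne'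
    _ ≤ _ := hℓ

/-- Deterministic lower bound for total cost: with the entrance fee function equal to `d`
at `±1` and `d + 1` elsewhere, every strategyproof deterministic mechanism for two agents
has, for each `ε ∈ (0,1)`, a profile on which its total cost is at least
`(2d + 3 - ε)/(2d + 1 + ε)` times the optimal total cost. -/
theorem deterministic_total_cost_lower_bound (d : ℝ) (hd : 0 < d)
    (e : ℝ → ℝ) (hdef : ∀ ℓ, e ℓ = if ℓ = -1 ∨ ℓ = 1 then d else d + 1)
    (f : (Fin 2 → ℝ) → ℝ)
    (hsp : ∀ (x : Fin 2 → ℝ) (i : Fin 2) (x' : ℝ),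
      cost e (x i) (f x) ≤ cost e (x i) (f (Function.update x i x')))
    (ε : ℝ) (hε0 : 0 < ε) (hε1 : ε < 1) :
    ∃ x : Fin 2 → ℝ,
      (2 * d + 3 - ε) / (2 * d + 1 + ε) * (⨅ ℓ : ℝ, totalCost e x ℓ) ≤ totalCost e x (f x) := by
  have he : ∀ ℓ, 0 ≤ e ℓ := fun ℓ => by rw [hdef]; split_ifs <;> linarith
  have he1 : e 1 = d := by simp [hdef]
  have hem1 : e (-1) = d := by simp [hdef]
  obtain ⟨δ, hδ⟩ : ∃ δ, δ = ε / 2 := ⟨_, rfl⟩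
  have hδ0 : 0 < δ := by linarith
  by_contra! hcon
  have hA : f ![1, -δ] = 1 := by
    by_contra hne
    refine (hcon ![1, -δ]).not_ge (ratio_mul_iInf_le hd he hε0 hε1 (m := 1) ?_ ?_)
    · simp only [totalCost, cost, Fin.sum_univ_two, Matrix.cons_val_zero, Matrix.cons_val_one, he1]
      rw [abs_of_nonpos (by linarith : -δ - 1 ≤ 0)]
      simp
      linarith
    · generalize f ![1, -δ] = ℓ at hne ⊢
      simp only [totalCost, cost, Fin.sum_univ_two, Matrix.cons_val_zero, Matrix.cons_val_one]
      rw [hdef]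
      split_ifs with h1
      · obtain rfl : ℓ = -1 := by tauto
        linarith [le_abs_self ((1 : ℝ) - -1), le_abs_self (-δ - -1)]
      · linarith [le_abs_self (1 - ℓ), neg_le_abs (-δ - ℓ)]
  have hB : f ![δ, -1] = -1 := by
    by_contra hne
    refine (hcon ![δ, -1]).not_ge (ratio_mul_iInf_le hd he hε0 hε1 (m := -1) ?_ ?_)
    · simp only [totalCost, cost, Fin.sum_univ_two, Matrix.cons_val_zero, Matrix.cons_val_one, hem1]
      rw [abs_of_nonneg (by linarith : 0 ≤ δ - -1)]
      simp
      linarith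
    · generalize f ![δ, -1] = ℓ at hne ⊢
      simp only [totalCost, cost, Fin.sum_univ_two, Matrix.cons_val_zero, Matrix.cons_val_one]
      rw [hdef]
      split_ifs with h1
      · obtain rfl : ℓ = 1 := by tauto
        linarith [neg_le_abs (δ - 1), neg_le_abs ((-1 : ℝ) - 1)]
      · linarith [le_abs_self (δ - ℓ), neg_le_abs (-1 - ℓ)]
  have h0 : f ![δ, -δ] = 1 := by
    have h := hsp ![δ, -δ] 0 1
    have hu : Function.update ![δ, -δ] 0 1 = ![1, -δ] := by ext i; fin_cases i <;> simp
    rw [hu, hA] at h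
    refine eq_one_of_cost_le hdef hδ0 (h.trans_eq ?_)
    simp only [cost, Matrix.cons_val_zero, he1]
    rw [abs_of_nonpos (by linarith)]
    ring
  have h1 : f ![δ, -δ] = -1 := by
    have h := hsp ![δ, -δ] 1 (-1)
    have hu : Function.update ![δ, -δ] 1 (-1) = ![δ, -1] := by ext i; fin_cases i <;> simp
    rw [hu, hB] at h
    refine eq_neg_one_of_cost_le hdef hδ0 (h.trans_eq ?_)
    simp only [cost, Matrix.cons_val_one, Matrix.cons_val_zero, hem1]
    rw [abs_of_nonneg (by linarith)]
    ring
  linarith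
end

section
/- (Approximation ratio of the Two-point Randomization Mechanism for total cost) Let e : ℝ → ℝ be an entrance fee function with 0 < m ≤ e(ℓ) ≤ M for all ℓ ∈ ℝ. Let x : Fin n → ℝ be a nondecreasing profile of n ≥ 1 agent positions, med = ⌈n/2⌉, ℓ_med an optimal location for the median agent x_med, and ℓ_tc a location with TC(x, ℓ_tc) ≤ TC(x, ℓ) for all ℓ ∈ ℝ. Let k be the number of agents i with cost(x_i, ℓ_tc) ≤ cost(x_i, ℓ_med). Then the expected total cost of the mechanism that outputs ℓ_tc with probability k/n and ℓ_med with probability 1 − k/n satisfies (k/n) · TC(x, ℓ_tc) + (1 − k/n) · TC(x, ℓ_med) ≤ (2 − 2/(M/m + 1)) · TC(x, ℓ_tc). -/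
/-- The bound `(N - K) * T ≤ N ^ 2 * B / 2` from the two estimates on the total gain `T`. -/
lemma sub_mul_le_half_sq {N K T L B : ℝ} (hKN : K ≤ N) (hB : 0 ≤ B) (hBL : B ≤ L)
    (hN : 0 ≤ N) (h1 : T ≤ N * B) (h2 : T ≤ K * (L + B) - N / 2 * (L - B)) :
    (N - K) * T ≤ N ^ 2 * B / 2 := by
  rcases le_total (N / 2) K with hK | hK
  · have := mul_le_mul_of_nonneg_left h1 (sub_nonneg.2 hKN)
    have := mul_le_mul_of_nonneg_right hK (mul_nonneg hN hB)
    nlinarith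
  · have h3 := mul_le_mul_of_nonneg_left h2 (sub_nonneg.2 hKN)
    -- With `u = N / 2 - K`, the slack is `u * N * (L - B) / 2 + u ^ 2 * (L + B)`.
    have h4 : 0 ≤ (N / 2 - K) * N * (L - B) :=
      mul_nonneg (mul_nonneg (by linarith) hN) (by linarith)
    have h5 : 0 ≤ (N / 2 - K) ^ 2 * (L + B) := mul_nonneg (sq_nonneg _) (by linarith)
    nlinarith

/-- The two-point bound, given a set `A` of at least half the agents each of whom is at least as far
from `a` as the position `μ` and prefers `b` to `a` at least as much as an agent at `μ` does. -/
lemma gain_le_of_half {e : ℝ → ℝ} {m M : ℝ} (hm : 0 < m) (hmM : m ≤ M)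
    (he : ∀ ℓ, m ≤ e ℓ ∧ e ℓ ≤ M) {N : ℕ} (x : Fin N → ℝ) {μ a b : ℝ}
    (hmed : ∀ ℓ, cost e μ b ≤ cost e μ ℓ) (A : Finset (Fin N)) (hA : (N : ℝ) / 2 ≤ A.card)
    (hgA : ∀ i ∈ A, cost e (x i) b - cost e (x i) a ≤ cost e μ b - cost e μ a)
    (hdA : ∀ i ∈ A, |μ - a| ≤ |x i - a|) :
    ((N : ℝ) - ((Finset.univ.filter
        (fun i => cost e (x i) a ≤ cost e (x i) b)).card : ℝ)) *
      (totalCost e x b - totalCost e x a) * (M + m) ≤ N * ((M - m) * totalCost e x a) := by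
  set S := Finset.univ.filter (fun i => cost e (x i) a ≤ cost e (x i) b) with hS
  have hSN : (S.card : ℝ) ≤ N := by
    exact_mod_cast (Finset.card_le_univ S).trans_eq (Fintype.card_fin N)
  have hTa0 : 0 ≤ totalCost e x a :=
    Finset.sum_nonneg fun i _ => add_nonneg (abs_nonneg _) (hm.le.trans (he a).1)
  have hN : (0 : ℝ) ≤ N := Nat.cast_nonneg N
  rcases le_total (totalCost e x b - totalCost e x a) 0 with hT | hT
  · have h1 := mul_nonneg hN (mul_nonneg (sub_nonneg.2 hmM) hTa0)
    have h2 := mul_nonneg (mul_nonneg (sub_nonneg.2 hSN) (neg_nonneg.2 hT))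
      (by linarith : (0 : ℝ) ≤ M + m)
    nlinarith
  obtain ⟨L, hL⟩ : ∃ L, L = |μ - a| := ⟨_, rfl⟩
  obtain ⟨B, hB⟩ : ∃ B, B = |μ - b| + e b - e a := ⟨_, rfl⟩
  have hL0 : 0 ≤ L := hL ▸ abs_nonneg _
  have hBL : B ≤ L := by
    have := hmed a
    simp only [cost] at this
    linarith
  have hBM : B ≤ M - e a := by
    have := hmed μ
    simp only [cost, sub_self, abs_zero] at this
    linarith [(he μ).2]
  have hgA' : ∀ i ∈ A, cost e (x i) b - cost e (x i) a ≤ B - L := fun i hi => by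
    have := hgA i hi
    simp only [cost] at this ⊢
    linarith
  have hg : ∀ i, cost e (x i) b - cost e (x i) a ≤ L + B := fun i => by
    have h1 := abs_sub_le (x i) a b
    have h2 := abs_sub_le a μ b
    rw [abs_sub_comm a μ] at h2
    simp only [cost]
    linarith
  have hsum : totalCost e x b - totalCost e x a = ∑ i, (cost e (x i) b - cost e (x i) a) := by
    simp [totalCost]
  have hcardA : ∑ i, (if i ∈ A then (1 : ℝ) else 0) = A.card := by simp
  have hcardS : ∑ i, (if i ∈ S then (1 : ℝ) else 0) = S.card := by simp
  have h1 : totalCost e x b - totalCost e x a ≤ N * B := by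
    have : totalCost e x b - totalCost e x a
        ≤ ∑ i, ((L + B) - 2 * L * (if i ∈ A then (1 : ℝ) else 0)) := by
      rw [hsum]
      refine Finset.sum_le_sum fun i _ => ?_
      split_ifs with hi
      · linarith [hgA' i hi]
      · linarith [hg i]
    rw [Finset.sum_sub_distrib, ← Finset.mul_sum, hcardA] at this
    simp only [Finset.sum_const, Finset.card_univ, Fintype.card_fin, nsmul_eq_mul] at this
    nlinarith [mul_le_mul_of_nonneg_left hA hL0]
  have hT' : N * B ≤ 0 ∨ 0 ≤ B := by
    rcases le_total B 0 with h | h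
    · exact Or.inl (mul_nonpos_of_nonneg_of_nonpos hN h)
    · exact Or.inr h
  have hTa : N * e a + N / 2 * L ≤ totalCost e x a := by
    have : ∑ i, (e a + L * (if i ∈ A then (1 : ℝ) else 0)) ≤ totalCost e x a := by
      refine Finset.sum_le_sum fun i _ => ?_
      simp only [cost]
      split_ifs with hi
      · linarith [hdA i hi]
      · linarith [abs_nonneg (x i - a)]
    rw [Finset.sum_add_distrib, ← Finset.mul_sum, hcardA] at this
    simp only [Finset.sum_const, Finset.card_univ, Fintype.card_fin, nsmul_eq_mul] at this
    nlinarith [mul_le_mul_of_nonneg_left hA hL0]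
  rcases hT' with hB0 | hB0
  · have hz : totalCost e x b - totalCost e x a = 0 := by linarith
    rw [hz]
    have := mul_nonneg hN (mul_nonneg (sub_nonneg.2 hmM) hTa0)
    linarith
  have h2 : totalCost e x b - totalCost e x a ≤ S.card * (L + B) - N / 2 * (L - B) := by
    have : totalCost e x b - totalCost e x a
        ≤ ∑ i, ((L + B) * (if i ∈ S then (1 : ℝ) else 0)
          - (L - B) * (if i ∈ A then (1 : ℝ) else 0)) := by
      rw [hsum]
      refine Finset.sum_le_sum fun i _ => ?_
      by_cases hiS : i ∈ S <;> by_cases hiA : i ∈ A <;> simp only [hiS, hiA, if_true, if_false]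
      · linarith [hgA' i hiA]
      · linarith [hg i]
      · linarith [hgA' i hiA]
      · have : ¬ cost e (x i) a ≤ cost e (x i) b := by simpa [hS] using hiS
        linarith
    rw [Finset.sum_sub_distrib, ← Finset.mul_sum, ← Finset.mul_sum, hcardA, hcardS] at this
    nlinarith [mul_le_mul_of_nonneg_left hA (sub_nonneg.2 hBL)]
  have h3 := mul_le_mul_of_nonneg_right (sub_mul_le_half_sq hSN hB0 hBL hN h1 h2)
    (by linarith : (0 : ℝ) ≤ M + m)
  refine h3.trans ?_
  have h4 : B * (M + m) ≤ (M - m) * (2 * e a + L) := by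
    have := mul_le_mul_of_nonneg_left hBL (sub_nonneg.2 hmM)
    have := mul_le_mul_of_nonneg_left hBM hm.le
    have := mul_le_mul_of_nonneg_left (he a).1 (hm.le.trans hmM)
    nlinarith
  have h5 := mul_le_mul_of_nonneg_left h4 (by positivity : (0 : ℝ) ≤ (N : ℝ) ^ 2 / 2)
  have h6 := mul_le_mul_of_nonneg_left hTa (mul_nonneg hN (sub_nonneg.2 hmM))
  nlinarith

/-- If every agent prefers `b` to `a` at least as much as an agent at `μ`, for whom `b` is optimal,
then the two-point bound is trivial, as `b` has the smaller total cost. -/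
lemma gain_le_of_forall {e : ℝ → ℝ} {m M : ℝ} (hm : 0 < m) (hmM : m ≤ M)
    (he : ∀ ℓ, m ≤ e ℓ ∧ e ℓ ≤ M) {N : ℕ} (x : Fin N → ℝ) {μ a b : ℝ}
    (hmed : ∀ ℓ, cost e μ b ≤ cost e μ ℓ)
    (hg : ∀ i, cost e (x i) b - cost e (x i) a ≤ cost e μ b - cost e μ a) :
    ((N : ℝ) - ((Finset.univ.filter
        (fun i => cost e (x i) a ≤ cost e (x i) b)).card : ℝ)) *
      (totalCost e x b - totalCost e x a) * (M + m) ≤ N * ((M - m) * totalCost e x a) := by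
  have hSN : ((Finset.univ.filter
      (fun i => cost e (x i) a ≤ cost e (x i) b)).card : ℝ) ≤ N := by
    exact_mod_cast (Finset.card_le_univ _).trans_eq (Fintype.card_fin N)
  have hTa0 : 0 ≤ totalCost e x a :=
    Finset.sum_nonneg fun i _ => add_nonneg (abs_nonneg _) (hm.le.trans (he a).1)
  have hT : totalCost e x b ≤ totalCost e x a :=
    Finset.sum_le_sum fun i _ => by linarith [hg i, hmed a]
  have h1 := mul_nonneg (Nat.cast_nonneg (α := ℝ) N) (mul_nonneg (sub_nonneg.2 hmM) hTa0)
  have h2 := mul_nonneg (mul_nonneg (sub_nonneg.2 hSN) (sub_nonneg.2 hT))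
    (by linarith : (0 : ℝ) ≤ M + m)
  nlinarith

/-- For `b ≤ a`, the difference of the distances to `b` and to `a` is monotone. -/
lemma abs_sub_sub_mono {a b y z : ℝ} (hab : b ≤ a) (hyz : y ≤ z) :
    |y - b| - |y - a| ≤ |z - b| - |z - a| := by
  rcases abs_cases (y - b) with h1 | h1 <;> rcases abs_cases (y - a) with h2 | h2 <;>
    rcases abs_cases (z - b) with h3 | h3 <;> rcases abs_cases (z - a) with h4 | h4 <;> linarith

/-- Approximation ratio of the Two-point Randomization Mechanism for the total cost:
with `n + 1` agents, median index `n / 2`, optimal-total-cost location `ℓtc`, and `k`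
agents weakly preferring `ℓtc` over `ℓmed`, the expected total cost of outputting `ℓtc`
with probability `k/(n+1)` and `ℓmed` otherwise is at most `(2 - 2/(M/m + 1))` times
the optimal total cost. -/
theorem TRM_total_cost_ratio (e : ℝ → ℝ) (m M : ℝ)
    (hm : 0 < m) (hmM : m ≤ M) (he : ∀ ℓ, m ≤ e ℓ ∧ e ℓ ≤ M)
    (n : ℕ) (x : Fin (n + 1) → ℝ) (hx : Monotone x)
    (ℓmed ℓtc : ℝ)
    (hmed : ∀ ℓ, cost e (x ⟨n / 2, by omega⟩) ℓmed ≤ cost e (x ⟨n / 2, by omega⟩) ℓ)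
    (htc : ∀ ℓ, totalCost e x ℓtc ≤ totalCost e x ℓ) :
    ((Finset.univ.filter
        (fun i => cost e (x i) ℓtc ≤ cost e (x i) ℓmed)).card : ℝ) / (n + 1) * totalCost e x ℓtc +
      (1 - ((Finset.univ.filter
        (fun i => cost e (x i) ℓtc ≤ cost e (x i) ℓmed)).card : ℝ) / (n + 1)) * totalCost e x ℓmed ≤
      (2 - 2 / (M / m + 1)) * totalCost e x ℓtc := by
  set p : Fin (n + 1) := ⟨n / 2, by omega⟩ with hp
  have key : (((n + 1 : ℕ) : ℝ) - ((Finset.univ.filter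
        (fun i => cost e (x i) ℓtc ≤ cost e (x i) ℓmed)).card : ℝ)) *
      (totalCost e x ℓmed - totalCost e x ℓtc) * (M + m) ≤
        ((n + 1 : ℕ) : ℝ) * ((M - m) * totalCost e x ℓtc) := by
    rcases le_total ℓmed ℓtc with hab | hab
    · rcases le_total (x p) ℓtc with hμ | hμ
      · refine gain_le_of_half hm hmM he x hmed (Finset.Iic p) ?_ (fun i hi => ?_) (fun i hi => ?_)
        · have : n + 1 ≤ 2 * (Finset.Iic p).card := by
            rw [Fin.card_Iic]
            simp only [hp]
            omega
          have : ((n + 1 : ℕ) : ℝ) ≤ 2 * (Finset.Iic p).card := by exact_mod_cast this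
          linarith
        · have := abs_sub_sub_mono hab (hx (Finset.mem_Iic.1 hi))
          simp only [cost]
          linarith
        · have := hx (Finset.mem_Iic.1 hi)
          rw [abs_of_nonpos (by linarith), abs_of_nonpos (by linarith)]
          linarith
      · refine gain_le_of_forall hm hmM he x hmed fun i => ?_
        have := abs_sub_le (x i) ℓtc ℓmed
        simp only [cost]
        rw [abs_of_nonneg (by linarith : 0 ≤ x p - ℓmed),
          abs_of_nonneg (by linarith : 0 ≤ x p - ℓtc)]
        rw [abs_of_nonneg (by linarith : 0 ≤ ℓtc - ℓmed)] at this
        linarith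
    · rcases le_total ℓtc (x p) with hμ | hμ
      · refine gain_le_of_half hm hmM he x hmed (Finset.Ici p) ?_ (fun i hi => ?_) (fun i hi => ?_)
        · have : n + 1 ≤ 2 * (Finset.Ici p).card := by
            rw [Fin.card_Ici]
            simp only [hp]
            omega
          have : ((n + 1 : ℕ) : ℝ) ≤ 2 * (Finset.Ici p).card := by exact_mod_cast this
          linarith
        · have := abs_sub_sub_mono hab (hx (Finset.mem_Ici.1 hi))
          simp only [cost]
          linarith
        · have := hx (Finset.mem_Ici.1 hi)
          rw [abs_of_nonneg (by linarith), abs_of_nonneg (by linarith)]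
          linarith
      · refine gain_le_of_forall hm hmM he x hmed fun i => ?_
        have := abs_sub_le (x i) ℓtc ℓmed
        simp only [cost]
        rw [abs_of_nonpos (by linarith : x p - ℓmed ≤ 0),
          abs_of_nonpos (by linarith : x p - ℓtc ≤ 0)]
        rw [abs_of_nonpos (by linarith : ℓtc - ℓmed ≤ 0)] at this
        linarith
  push_cast at key
  generalize ((Finset.univ.filter
        (fun i => cost e (x i) ℓtc ≤ cost e (x i) ℓmed)).card : ℝ) = K at key ⊢
  generalize totalCost e x ℓtc = Ta at key ⊢
  generalize totalCost e x ℓmed = Tb at key ⊢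
  have hn : (0 : ℝ) < n + 1 := by positivity
  have hMm : 0 < M + m := by linarith
  have hr : 2 - 2 / (M / m + 1) = 1 + (M - m) / (M + m) := by
    have : M / m + 1 = (M + m) / m := by field_simp
    rw [this]
    field_simp
    ring
  rw [hr]
  have h : ((n : ℝ) + 1 - K) / (n + 1) * (Tb - Ta) ≤ (M - m) / (M + m) * Ta := by
    rw [div_mul_eq_mul_div, div_mul_eq_mul_div, div_le_div_iff₀ hn hMm]
    linarith
  have h' : ((n : ℝ) + 1 - K) / (n + 1) = 1 - K / (n + 1) := by
    field_simp
  rw [h'] at h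
  linarith
end

section
/- (Deterministic lower bound 2 for maximum cost) Let α ≥ 1 and define the entrance fee function e by e(1 − α) = 1 and e(ℓ) = α for every ℓ ≠ 1 − α (so its max-min ratio is α). Let f : ℝ² → ℝ be any deterministic mechanism for two agents that is strategyproof with respect to e. Then for every ε ∈ (0, 1) there exists a profile x ∈ ℝ² such that MC(x, f(x)) > (2 − ε) · inf_{ℓ ∈ ℝ} MC(x, ℓ). In particular, no strategyproof mechanism achieves a maximum cost approximation ratio less than 2. -/
/-- Maximum cost of a two-agent profile for a facility at `ℓ`. -/
noncomputable def MC2 (e : ℝ → ℝ) (x : Fin 2 → ℝ) (ℓ : ℝ) : ℝ :=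
  max (cost e (x 0) ℓ) (cost e (x 1) ℓ)

theorem fee_of_pos {α : ℝ} (hα : 1 ≤ α) {e : ℝ → ℝ}
    (hdef : ∀ ℓ, e ℓ = if ℓ = 1 - α then 1 else α) {y : ℝ} (hy : 0 < y) : e y = α := by
  rw [hdef, if_neg (by linarith)]

/-- The smaller fee at `1 - α` is offset by the distance: every nonpositive facility, the cheap
one included, costs an agent at `x` at least `x + α`. -/
theorem le_cost_of_nonpos {α : ℝ} {e : ℝ → ℝ}
    (hdef : ∀ ℓ, e ℓ = if ℓ = 1 - α then 1 else α) {x y : ℝ} (hy : y ≤ 0) :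
    x + α ≤ cost e x y := by
  unfold cost
  rw [hdef]
  have := le_abs_self (x - y)
  split_ifs <;> linarith

/-- A positive agent has cost at most `α` only when the facility is at its own position. -/
theorem eq_of_cost_le {α : ℝ} (hα : 1 ≤ α) {e : ℝ → ℝ}
    (hdef : ∀ ℓ, e ℓ = if ℓ = 1 - α then 1 else α) {x y : ℝ} (hx : 0 < x)
    (h : cost e x y ≤ α) : y = x := by
  rcases le_or_gt y 0 with hy | hy
  · linarith [le_cost_of_nonpos hdef (x := x) hy]
  · unfold cost at h
    rw [fee_of_pos hα hdef hy] at h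
    have := abs_nonpos_iff.mp (show |x - y| ≤ 0 by linarith)
    linarith

/-- Placing the facility at the midpoint bounds the optimum. -/
theorem iInf_MC2_le {α : ℝ} (hα : 1 ≤ α) {e : ℝ → ℝ}
    (hdef : ∀ ℓ, e ℓ = if ℓ = 1 - α then 1 else α) {a b : ℝ} (ha : 0 < a) (hab : a ≤ b) :
    (⨅ ℓ : ℝ, MC2 e ![a, b] ℓ) ≤ α + (b - a) / 2 := by
  have hbdd : BddBelow (Set.range fun ℓ => MC2 e ![a, b] ℓ) := by
    refine ⟨0, ?_⟩
    rintro _ ⟨ℓ, rfl⟩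
    refine le_trans ?_ (le_max_left _ _)
    unfold cost
    rw [hdef]
    have := abs_nonneg ((![a, b] : Fin 2 → ℝ) 0 - ℓ)
    split_ifs <;> linarith
  refine (ciInf_le hbdd ((a + b) / 2)).trans ?_
  have he : e ((a + b) / 2) = α := fee_of_pos hα hdef (by linarith)
  simp only [MC2, cost, he, Matrix.cons_val_zero, Matrix.cons_val_one]
  rw [abs_of_nonpos (by linarith), abs_of_nonneg (by linarith)]
  exact max_le (by linarith) (by linarith)

/-- Deterministic lower bound `2` for the maximum cost: with entrance fee `1` at `1 - α`
and `α` elsewhere, every strategyproof deterministic mechanism for two agents has, for each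
`ε ∈ (0,1)`, a profile on which its maximum cost exceeds `2 - ε` times the optimum. -/
theorem deterministic_max_cost_lower_bound_two (α : ℝ) (hα : 1 ≤ α)
    (e : ℝ → ℝ) (hdef : ∀ ℓ, e ℓ = if ℓ = 1 - α then 1 else α)
    (f : (Fin 2 → ℝ) → ℝ)
    (hsp : ∀ (x : Fin 2 → ℝ) (i : Fin 2) (x' : ℝ),
      cost e (x i) (f x) ≤ cost e (x i) (f (Function.update x i x')))
    (ε : ℝ) (hε0 : 0 < ε) (hε1 : ε < 1) :
    ∃ x : Fin 2 → ℝ,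
      (2 - ε) * (⨅ ℓ : ℝ, MC2 e x ℓ) < MC2 e x (f x) := by
  by_contra! h
  have key : ∀ a b : ℝ, 0 < a → a ≤ b →
      cost e a (f ![a, b]) ≤ (2 - ε) * (α + (b - a) / 2) ∧
      cost e b (f ![a, b]) ≤ (2 - ε) * (α + (b - a) / 2) := by
    intro a b ha hab
    have h2 := (h ![a, b]).trans
      (mul_le_mul_of_nonneg_left (iInf_MC2_le hα hdef ha hab) (by linarith))
    exact ⟨(le_max_left _ _).trans h2, (le_max_right _ _).trans h2⟩
  -- For diameter `d ≥ 2 α / ε`, the gap `ε d / 2` absorbs the contribution of the fee.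
  have gap : ∀ d : ℝ, 2 * α / ε ≤ d → (2 - ε) * (α + d / 2) < α + d := by
    intro d hd
    rw [div_le_iff₀ hε0] at hd
    nlinarith [mul_pos hε0 (by linarith : 0 < α)]
  set K := 2 * α / ε with hK
  have hK0 : 0 < K := by positivity
  set y := f ![1, 1 + 2 * K] with hy
  have hy0 : 0 < y := by
    by_contra! hn
    have h1 := (key 1 (1 + 2 * K) one_pos (by linarith)).2
    have h2 := le_cost_of_nonpos hdef (x := 1 + 2 * K) hn
    have h3 := gap (1 + 2 * K - 1) (by linarith)
    linarith
  have hey : e y = α := fee_of_pos hα hdef hy0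
  have hcy : cost e y y = α := by simp [cost, hey]
  rcases le_total (1 + K) y with hc | hc
  · have h1 := hsp ![1, y] 1 (1 + 2 * K)
    have hu : Function.update ![1, y] 1 (1 + 2 * K) = ![1, 1 + 2 * K] := by
      ext i; fin_cases i <;> simp
    rw [hu, ← hy] at h1
    simp only [Matrix.cons_val_one, Matrix.cons_val_fin_one, hcy] at h1
    have h2 := eq_of_cost_le hα hdef hy0 h1
    have h3 := (key 1 y one_pos (by linarith)).1
    rw [h2, cost, hey, abs_of_nonpos (by linarith)] at h3
    linarith [gap (y - 1) (by linarith)]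
  · have h1 := hsp ![y, 1 + 2 * K] 0 1
    have hu : Function.update ![y, 1 + 2 * K] 0 1 = ![1, 1 + 2 * K] := by
      ext i; fin_cases i <;> simp
    rw [hu, ← hy] at h1
    simp only [Matrix.cons_val_zero, hcy] at h1
    have h2 := eq_of_cost_le hα hdef hy0 h1
    have h3 := (key y (1 + 2 * K) hy0 (by linarith)).2
    rw [h2, cost, hey, abs_of_nonneg (by linarith)] at h3
    linarith [gap (1 + 2 * K - y) (by linarith)]
end

section
/- (Deterministic lower bound 3 − 4/(r+1) for maximum cost) Let d ≥ 0 and define the entrance fee function e by e(ℓ) = d + 2 for ℓ ∈ {−1, 1} and e(ℓ) = d + 4 otherwise (its max-min ratio is r = (d+4)/(d+2)). Let f : ℝ² → ℝ be any deterministic mechanism for two agents that is strategyproof with respect to e. Then for every ε ∈ (0, 1) there exists a profile x ∈ ℝ² such that MC(x, f(x)) ≥ ((d + 5)/(d + 3 + ε)) · inf_{ℓ ∈ ℝ} MC(x, ℓ); note (d+5)/(d+3) = 3 − 4/(r + 1) = (3r − 1)/(r + 1). -/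
/-- A location of maximum cost at most `d + 3 + ε` bounds the optimum, so maximum cost `d + 5` at
the chosen location already gives the required ratio. -/
lemma ratio_mul_iInf_MC2_le {d ε : ℝ} (hd : 0 ≤ d) (hε : 0 < ε) {e : ℝ → ℝ} (he : ∀ ℓ, 0 ≤ e ℓ)
    (x : Fin 2 → ℝ) (p q : ℝ) (hp : MC2 e x p ≤ d + 3 + ε) (hq : d + 5 ≤ MC2 e x q) :
    (d + 5) / (d + 3 + ε) * (⨅ ℓ : ℝ, MC2 e x ℓ) ≤ MC2 e x q := by
  have hb : BddBelow (Set.range fun ℓ => MC2 e x ℓ) := by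
    refine ⟨0, ?_⟩
    rintro _ ⟨ℓ, rfl⟩
    exact le_max_of_le_left (add_nonneg (abs_nonneg _) (he ℓ))
  have hpos : 0 < d + 3 + ε := by linarith
  calc (d + 5) / (d + 3 + ε) * (⨅ ℓ : ℝ, MC2 e x ℓ)
      ≤ (d + 5) / (d + 3 + ε) * (d + 3 + ε) :=
        mul_le_mul_of_nonneg_left ((ciInf_le hb p).trans hp) (by positivity)
    _ = d + 5 := div_mul_cancel₀ _ hpos.ne'
    _ ≤ _ := hq

/-- Deterministic lower bound `3 - 4/(r+1)` for the maximum cost: with entrance fee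
`d + 2` at `±1` and `d + 4` elsewhere, every strategyproof deterministic mechanism for two
agents has, for each `ε ∈ (0,1)`, a profile on which its maximum cost is at least
`(d + 5)/(d + 3 + ε)` times the optimum. -/
theorem deterministic_max_cost_lower_bound_three (d : ℝ) (hd : 0 ≤ d)
    (e : ℝ → ℝ) (hdef : ∀ ℓ, e ℓ = if ℓ = -1 ∨ ℓ = 1 then d + 2 else d + 4)
    (f : (Fin 2 → ℝ) → ℝ)
    (hsp : ∀ (x : Fin 2 → ℝ) (i : Fin 2) (x' : ℝ),
      cost e (x i) (f x) ≤ cost e (x i) (f (Function.update x i x')))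
    (ε : ℝ) (hε0 : 0 < ε) (hε1 : ε < 1) :
    ∃ x : Fin 2 → ℝ,
      (d + 5) / (d + 3 + ε) * (⨅ ℓ : ℝ, MC2 e x ℓ) ≤ MC2 e x (f x) := by
  have he1 : e 1 = d + 2 := by simp [hdef]
  have hem1 : e (-1) = d + 2 := by simp [hdef]
  have he_other : ∀ ℓ, ℓ ≠ -1 → ℓ ≠ 1 → e ℓ = d + 4 := by
    intro ℓ h1 h2
    simp [hdef, h1, h2]
  have he_nonneg : ∀ ℓ, 0 ≤ e ℓ := by
    intro ℓ
    rw [hdef]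
    split_ifs <;> linarith
  by_cases hf : f ![-ε, ε] = -1
  · have hs := hsp ![-ε, ε] 1 2
    have hu : Function.update ![-ε, ε] 1 2 = ![-ε, 2] := by
      ext i
      fin_cases i <;> simp
    rw [hu, hf] at hs
    refine ⟨![-ε, 2], ratio_mul_iInf_MC2_le hd hε0 he_nonneg _ 1 _ ?_ ?_⟩
    · simp only [MC2, cost, he1, Matrix.cons_val_zero, Matrix.cons_val_one,
        Matrix.cons_val_fin_one]
      refine max_le ?_ ?_
      · rw [abs_of_neg (by linarith)]
        linarith
      · norm_num
        linarith
    · simp only [cost, hem1, Matrix.cons_val_one, Matrix.cons_val_fin_one] at hs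
      simp only [MC2, cost, Matrix.cons_val_zero, Matrix.cons_val_one,
        Matrix.cons_val_fin_one]
      generalize f ![-ε, 2] = q at *
      by_cases hq1 : q = 1
      · subst hq1
        rw [he1, abs_of_pos (by linarith), abs_of_neg (by linarith)] at hs
        linarith
      by_cases hqm1 : q = -1
      · subst hqm1
        refine le_max_of_le_right ?_
        rw [hem1]
        norm_num
        linarith
      rw [he_other q hqm1 hq1, le_max_iff]
      by_contra! h
      linarith [neg_abs_le (-ε - q), le_abs_self (2 - q)]
  · have hs := hsp ![-ε, ε] 0 (-2)
    have hu : Function.update ![-ε, ε] 0 (-2) = ![-2, ε] := by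
      ext i
      fin_cases i <;> simp
    rw [hu] at hs
    refine ⟨![-2, ε], ratio_mul_iInf_MC2_le hd hε0 he_nonneg _ (-1) _ ?_ ?_⟩
    · simp only [MC2, cost, hem1, Matrix.cons_val_zero, Matrix.cons_val_one,
        Matrix.cons_val_fin_one]
      refine max_le ?_ ?_
      · norm_num
        linarith
      · rw [abs_of_pos (by linarith)]
        linarith
    · simp only [cost, Matrix.cons_val_zero] at hs
      simp only [MC2, cost, Matrix.cons_val_zero, Matrix.cons_val_one,
        Matrix.cons_val_fin_one]
      generalize f ![-2, ε] = q at *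
      generalize f ![-ε, ε] = p at *
      by_cases hqm1 : q = -1
      · subst hqm1
        rw [hem1, abs_of_pos (a := -ε - -1) (by linarith)] at hs
        by_cases hp1 : p = 1
        · subst hp1
          rw [he1, abs_of_neg (by linarith)] at hs
          linarith
        · rw [he_other p hf hp1] at hs
          linarith [abs_nonneg (-ε - p)]
      by_cases hq1 : q = 1
      · subst hq1
        refine le_max_of_le_left ?_
        rw [he1]
        norm_num
        linarith
      rw [he_other q hqm1 hq1, le_max_iff]
      by_contra! h
      linarith [neg_abs_le (-2 - q), le_abs_self (ε - q)]
end

section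
/- (Group strategyproofness of the two-facility mechanism m_{j,k}) Let e : ℝ → ℝ be an entrance fee function and let opt : ℝ → ℝ be a monotone (nondecreasing) map such that for every x ∈ ℝ, opt(x) is an optimal location for x. Fix n ≥ 1 and indices 1 ≤ j ≤ k ≤ n, and define the two-facility mechanism f : ℝⁿ → ℝ² by f(y) = (opt(y₍ⱼ₎), opt(y₍ₖ₎)), where y₍ⱼ₎ and y₍ₖ₎ are the j-th and k-th smallest coordinates of the reported profile y. Then f is group strategyproof: for every true profile y, every nonempty coalition S of agents, and every reported profile y' that agrees with y on all agents outside S, there exists an agent i ∈ S with min(cost(y_i, opt(y₍ⱼ₎)), cost(y_i, opt(y₍ₖ₎))) ≤ min(cost(y_i, opt(y'₍ⱼ₎)), cost(y_i, opt(y'₍ₖ₎))). -/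
theorem cost_le_of_between {e opt : ℝ → ℝ} (hmono : Monotone opt)
    (hopt : ∀ x ℓ, cost e x (opt x) ≤ cost e x ℓ) {x z w : ℝ}
    (h : (x ≤ z ∧ z ≤ w) ∨ (w ≤ z ∧ z ≤ x)) :
    cost e x (opt z) ≤ cost e x (opt w) := by
  have h1 := hopt z (opt w)
  unfold cost at *
  -- For `p ≤ q` the map `t ↦ |t - p| - |t - q|` is nondecreasing, so the preference of `z` for
  -- `opt z` carries over to `x`.
  have key : ∀ p q s t : ℝ, p ≤ q → s ≤ t → |s - p| - |s - q| ≤ |t - p| - |t - q| := by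
    intro p q s t hpq hst
    rcases abs_cases (s - p) with h1 | h1 <;> rcases abs_cases (s - q) with h2 | h2 <;>
      rcases abs_cases (t - p) with h3 | h3 <;> rcases abs_cases (t - q) with h4 | h4 <;> linarith
  rcases h with ⟨hxz, hzw⟩ | ⟨hwz, hzx⟩
  · linarith [key _ _ _ _ (hmono hzw) hxz]
  · linarith [key _ _ _ _ (hmono hwz) hzx]

/-- The `j`-th order statistic (counting from `0`) satisfies a downward closed property exactly
when more than `j` coordinates do. -/
theorem sort_iff_lt_card {n : ℕ} (y : Fin n → ℝ) (j : Fin n) (P : ℝ → Prop) [DecidablePred P]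
    (hP : ∀ s t, s ≤ t → P t → P s) :
    P (y (Tuple.sort y j)) ↔ (j : ℕ) < (Finset.univ.filter fun i => P (y i)).card := by
  have hm : Monotone (y ∘ Tuple.sort y) := Tuple.monotone_sort y
  constructor
  · intro h
    have hsub : (Finset.Iic j).map (Tuple.sort y).toEmbedding ⊆
        Finset.univ.filter fun i => P (y i) := by
      intro i hi
      obtain ⟨m, hmj, rfl⟩ := Finset.mem_map.1 hi
      exact Finset.mem_filter.2 ⟨Finset.mem_univ _, hP _ _ (hm (Finset.mem_Iic.1 hmj)) h⟩
    have := Finset.card_le_card hsub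
    rw [Finset.card_map, Fin.card_Iic] at this
    omega
  · intro h
    by_contra hn
    have hsub : (Finset.univ.filter fun i => P (y i)) ⊆
        (Finset.Iio j).map (Tuple.sort y).toEmbedding := by
      intro i hi
      refine Finset.mem_map.2 ⟨(Tuple.sort y).symm i, Finset.mem_Iio.2 ?_, by simp⟩
      by_contra hle
      have hji := hm (not_lt.1 hle)
      simp only [Function.comp_apply, Equiv.apply_symm_apply] at hji
      exact hn (hP _ _ hji (Finset.mem_filter.1 hi).2)
    have := Finset.card_le_card hsub
    rw [Finset.card_map, Fin.card_Iio] at this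
    omega

/-- If passing from `y` to `y'` brings an order statistic into a downward closed set, then the
coalition that changed its coordinates has strictly more members in that set under `y'`. -/
theorem card_filter_lt_of_sort {n : ℕ} {y y' : Fin n → ℝ} {S : Finset (Fin n)}
    (hagree : ∀ i ∉ S, y' i = y i) (j : Fin n) (P : ℝ → Prop) [DecidablePred P]
    (hP : ∀ s t, s ≤ t → P t → P s)
    (h : ¬ P (y (Tuple.sort y j))) (h' : P (y' (Tuple.sort y' j))) :
    (S.filter fun i => P (y i)).card < (S.filter fun i => P (y' i)).card := by
  rw [sort_iff_lt_card y j P hP] at h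
  rw [sort_iff_lt_card y' j P hP] at h'
  have split : ∀ v : Fin n → ℝ, (Finset.univ.filter fun i => P (v i)).card =
      (S.filter fun i => P (v i)).card + (Sᶜ.filter fun i => P (v i)).card := by
    intro v
    rw [← Finset.card_union_of_disjoint
      (Finset.disjoint_filter_filter disjoint_compl_right), ← Finset.filter_union,
      Finset.union_compl]
  have hout : (Sᶜ.filter fun i => P (y' i)) = Sᶜ.filter fun i => P (y i) :=
    Finset.filter_congr fun i hi => by rw [hagree i (Finset.mem_compl.1 hi)]
  have h1 := split y
  have h2 := split y'
  rw [hout] at h2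
  omega

theorem exists_of_card_filter_lt {α : Type*} {S : Finset α} {P Q : α → Prop}
    [DecidablePred P] [DecidablePred Q] (h : (S.filter P).card < (S.filter Q).card) :
    ∃ i ∈ S, Q i ∧ ¬ P i := by
  obtain ⟨i, hi, hni⟩ := Finset.exists_mem_notMem_of_card_lt_card h
  rw [Finset.mem_filter] at hi hni
  exact ⟨i, hi.1, hi.2, fun hp => hni ⟨hi.1, hp⟩⟩

/-- Group strategyproofness of the two-facility mechanism `m_{j,k}` that places the
facilities at (monotonically chosen) optimal locations for the agents with the `j`-th
and `k`-th smallest reported positions. -/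
theorem mjk_group_strategyproof (e : ℝ → ℝ) (he : ∀ ℓ, 0 ≤ e ℓ)
    (opt : ℝ → ℝ) (hmono : Monotone opt)
    (hopt : ∀ x ℓ, cost e x (opt x) ≤ cost e x ℓ)
    (n : ℕ) (j k : Fin n) (hjk : j ≤ k)
    (y y' : Fin n → ℝ) (S : Finset (Fin n)) (hS : S.Nonempty)
    (hagree : ∀ i ∉ S, y' i = y i) :
    ∃ i ∈ S,
      min (cost e (y i) (opt (y (Tuple.sort y j))))
          (cost e (y i) (opt (y (Tuple.sort y k)))) ≤
      min (cost e (y i) (opt (y' (Tuple.sort y' j))))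
          (cost e (y i) (opt (y' (Tuple.sort y' k)))) := by
  by_contra! hcon
  have hab : y (Tuple.sort y j) ≤ y (Tuple.sort y k) := Tuple.monotone_sort y hjk
  have hab' : y' (Tuple.sort y' j) ≤ y' (Tuple.sort y' k) := Tuple.monotone_sort y' hjk
  have below := fun c => card_filter_lt_of_sort hagree j (· < c) fun _ _ => lt_of_le_of_lt
  have below' := fun c => card_filter_lt_of_sort hagree k (· < c) fun _ _ => lt_of_le_of_lt
  have above := fun c => card_filter_lt_of_sort (y := y') (y' := y)
    (fun i hi => (hagree i hi).symm) j (· ≤ c) fun _ _ => le_trans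
  have above' := fun c => card_filter_lt_of_sort (y := y') (y' := y)
    (fun i hi => (hagree i hi).symm) k (· ≤ c) fun _ _ => le_trans
  generalize y' (Tuple.sort y' j) = a' at *
  generalize y' (Tuple.sort y' k) = b' at *
  generalize y (Tuple.sort y j) = a at *
  generalize y (Tuple.sort y k) = b at *
  -- For a member of `S`, it is impossible that each new facility is matched by some old one.
  have gain : ∀ i ∈ S, ∀ c d, (c = a ∨ c = b) → (d = a ∨ d = b) →
      cost e (y i) (opt c) ≤ cost e (y i) (opt a') →
      cost e (y i) (opt d) ≤ cost e (y i) (opt b') → False := by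
    intro i hi c d hc hd h1 h2
    refine (hcon i hi).not_ge (le_min (le_trans ?_ h1) (le_trans ?_ h2))
    · rcases hc with rfl | rfl
      exacts [min_le_left _ _, min_le_right _ _]
    · rcases hd with rfl | rfl
      exacts [min_le_left _ _, min_le_right _ _]
  have btw : ∀ {x z w : ℝ}, (x ≤ z ∧ z ≤ w) ∨ (w ≤ z ∧ z ≤ x) →
      cost e x (opt z) ≤ cost e x (opt w) := cost_le_of_between hmono hopt
  have left : ∀ i ∈ S, y i ≤ a → a' < a := by
    intro i hi hia
    by_contra! h
    exact gain i hi a a (.inl rfl) (.inl rfl) (btw (.inl ⟨hia, h⟩))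
      (btw (.inl ⟨hia, h.trans hab'⟩))
  have right : ∀ i ∈ S, b ≤ y i → b < b' := by
    intro i hi hib
    by_contra! h
    exact gain i hi b b (.inr rfl) (.inr rfl) (btw (.inr ⟨hab'.trans h, hib⟩))
      (btw (.inr ⟨h, hib⟩))
  have ha : a' ≤ a := by
    by_contra! h
    obtain ⟨i, hi, h1, -⟩ := exists_of_card_filter_lt (above a h.not_ge le_rfl)
    exact (left i hi h1).not_gt h
  have hb : b ≤ b' := by
    by_contra! h
    obtain ⟨i, hi, -, h1⟩ := exists_of_card_filter_lt (below' b (lt_irrefl b) h)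
    exact (right i hi (not_lt.1 h1)).not_gt h
  have outer : ∀ i ∈ S, y i < a ∨ b < y i := by
    intro i hi
    by_contra! h
    exact gain i hi a b (.inl rfl) (.inr rfl) (btw (.inr ⟨ha, h.1⟩)) (btw (.inl ⟨h.2, hb⟩))
  have ha_to_b : a' < a → b < b' := by
    intro h
    obtain ⟨i, hi, -, h1⟩ := exists_of_card_filter_lt (below a (lt_irrefl a) h)
    exact right i hi ((outer i hi).resolve_left h1).le
  have hb_to_a : b < b' → a' < a := by
    intro h
    obtain ⟨i, hi, h1, -⟩ := exists_of_card_filter_lt (above' b h.not_ge le_rfl)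
    exact left i hi ((outer i hi).resolve_right (not_lt.2 h1)).le
  have both : a' < a ∧ b < b' := by
    obtain ⟨i, hi⟩ := hS
    rcases outer i hi with h | h
    · exact ⟨left i hi h.le, ha_to_b (left i hi h.le)⟩
    · exact ⟨hb_to_a (right i hi h.le), right i hi h.le⟩
  have h1 := below a (lt_irrefl a) both.1
  have h2 := above' b both.2.not_ge le_rfl
  have h3 : (S.filter fun i => y' i < a).card ≤ (S.filter fun i => y' i ≤ b).card :=
    Finset.card_le_card (Finset.monotone_filter_right S fun i _ h => h.le.trans hab)
  have h4 : (S.filter fun i => y i ≤ b).card ≤ (S.filter fun i => y i < a).card := by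
    refine Finset.card_le_card fun i hi => ?_
    rw [Finset.mem_filter] at hi ⊢
    exact ⟨hi.1, (outer i hi.1).resolve_right (not_lt.2 hi.2)⟩
  exact absurd (h1.trans_le (h3.trans (h2.le.trans h4))) (lt_irrefl _)
end

section
/- (Two-facility deterministic lower bound 2 for maximum cost) Let α ≥ 1 and define the entrance fee function e by e(1 − α) = 1 and e(ℓ) = α for every ℓ ≠ 1 − α (so its max-min ratio is α). Let f : ℝ³ → ℝ² be any deterministic two-facility mechanism for three agents that is strategyproof with respect to e (no agent can strictly decrease min(cost(x_i, f(x)₁), cost(x_i, f(x)₂)) by unilaterally misreporting). Then for every ε ∈ (0, 1) there exists a profile x ∈ ℝ³ such that max_i min(cost(x_i, f(x)₁), cost(x_i, f(x)₂)) > (2 − ε) · inf_{(a,b) ∈ ℝ²} max_i min(cost(x_i, a), cost(x_i, b)). In particular, no strategyproof two-facility mechanism achieves a maximum cost approximation ratio less than 2. -/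
/-- Two-facility maximum cost of a three-agent profile for facilities at `a` and `b`. -/
noncomputable def MC3 (e : ℝ → ℝ) (x : Fin 3 → ℝ) (a b : ℝ) : ℝ :=
  Finset.univ.sup' Finset.univ_nonempty
    (fun i => min (cost e (x i) a) (cost e (x i) b))

/-- The effective location of a facility at `ℓ`, as seen by agents on the half-line `x ≥ 0`:
the cheap location `1 - α` is moved to `0`, all others are kept. -/
noncomputable def effLoc (α ℓ : ℝ) : ℝ := if ℓ = 1 - α then 0 else ℓ

lemma cost_eq_effLoc {α : ℝ} (hα : 1 ≤ α) {e : ℝ → ℝ}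
    (hdef : ∀ ℓ, e ℓ = if ℓ = 1 - α then 1 else α) {x : ℝ} (hx : 0 ≤ x) (ℓ : ℝ) :
    cost e x ℓ = |x - effLoc α ℓ| + α := by
  unfold cost effLoc
  rw [hdef]
  split_ifs with h
  · subst h
    rw [abs_of_nonneg (by linarith), abs_of_nonneg (by linarith)]
    ring
  · rfl

/-- A positive location is different from `1 - α ≤ 0`. -/
lemma effLoc_of_pos {α : ℝ} (hα : 1 ≤ α) {ℓ : ℝ} (hℓ : 0 < ℓ) : effLoc α ℓ = ℓ :=
  if_neg (by intro h; linarith)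

/-- The optimum for agents at `0`, `D`, `L` is at most `D / 2 + α`, the cost with facilities
at `D / 2` and `L`. -/
lemma iInf_MC3_le {α : ℝ} (hα : 1 ≤ α) {e : ℝ → ℝ}
    (hdef : ∀ ℓ, e ℓ = if ℓ = 1 - α then 1 else α) {D L : ℝ} (hD : 0 < D) (hL : 0 < L) :
    (⨅ p : ℝ × ℝ, MC3 e ![0, D, L] p.1 p.2) ≤ D / 2 + α := by
  have hpos : ∀ x ℓ, 0 ≤ cost e x ℓ := fun x ℓ => by
    have he : 0 ≤ e ℓ := by rw [hdef]; split_ifs <;> linarith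
    unfold cost
    positivity
  have hbdd : BddBelow (Set.range fun p : ℝ × ℝ => MC3 e ![0, D, L] p.1 p.2) := by
    refine ⟨0, ?_⟩
    rintro _ ⟨p, rfl⟩
    exact (le_min (hpos _ _) (hpos _ _)).trans
      (Finset.le_sup' (fun i => min (cost e (![0, D, L] i) p.1) (cost e (![0, D, L] i) p.2))
        (Finset.mem_univ (0 : Fin 3)))
  refine (ciInf_le hbdd (D / 2, L)).trans (Finset.sup'_le _ _ fun i _ => ?_)
  have hD2 : effLoc α (D / 2) = D / 2 := effLoc_of_pos hα (by linarith)
  fin_cases i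
  · refine (min_le_left _ _).trans ?_
    change cost e 0 (D / 2) ≤ _
    rw [cost_eq_effLoc hα hdef le_rfl, hD2, abs_of_nonpos (by linarith)]
    linarith
  · refine (min_le_left _ _).trans ?_
    change cost e D (D / 2) ≤ _
    rw [cost_eq_effLoc hα hdef hD.le, hD2, abs_of_nonneg (by linarith)]
    linarith
  · refine (min_le_right _ _).trans ?_
    change cost e L L ≤ _
    rw [cost_eq_effLoc hα hdef hL.le, effLoc_of_pos hα hL, sub_self, abs_zero]
    linarith

/-- If facilities at `u` and `v` serve agents at `0`, `D` and a far `L` within a radius `R < D`,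
then one of them is near `L` and the other one serves both `0` and `D`. -/
lemma facility_between {D L R u v : ℝ} (hR : R < D) (hL : 3 * D ≤ L)
    (h0 : min |0 - u| |0 - v| ≤ R) (h1 : min |D - u| |D - v| ≤ R)
    (h2 : min |L - u| |L - v| ≤ R) :
    (D - R ≤ u ∧ u ≤ R ∧ L - R ≤ v) ∨ (D - R ≤ v ∧ v ≤ R ∧ L - R ≤ u) := by
  simp only [min_le_iff, abs_le] at h0 h1 h2
  grind

/-- A mechanism output `(a, b)` of ratio at most `2 - ε` on the profile `(0, D, L)`, in terms of
effective locations. Here `R = D - ε * D / 2 + (1 - ε) * α` is `(2 - ε) * (D / 2 + α) - α`. -/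
lemma facility_between_of_ratio {α : ℝ} (hα : 1 ≤ α) {e : ℝ → ℝ}
    (hdef : ∀ ℓ, e ℓ = if ℓ = 1 - α then 1 else α) {ε : ℝ} (hε0 : 0 < ε) (hε1 : ε < 1)
    {D L a b R : ℝ} (hD : 2 * α < ε * D) (hD0 : 0 < D) (hL : 3 * D ≤ L)
    (hR : R = D - ε * D / 2 + (1 - ε) * α)
    (h : MC3 e ![0, D, L] a b ≤ (2 - ε) * (⨅ p : ℝ × ℝ, MC3 e ![0, D, L] p.1 p.2)) :
    (D - R ≤ effLoc α a ∧ effLoc α a ≤ R ∧ L - R ≤ effLoc α b) ∨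
      (D - R ≤ effLoc α b ∧ effLoc α b ≤ R ∧ L - R ≤ effLoc α a) := by
  have hL0 : 0 < L := by linarith
  have hopt := iInf_MC3_le hα hdef hD0 hL0
  have hMC : MC3 e ![0, D, L] a b ≤ R + α := by
    refine h.trans ((mul_le_mul_of_nonneg_left hopt (by linarith)).trans (le_of_eq ?_))
    rw [hR]; ring
  have hi : ∀ i : Fin 3,
      min (cost e (![0, D, L] i) a) (cost e (![0, D, L] i) b) ≤ R + α := fun i =>
    (Finset.le_sup' (fun i => min (cost e (![0, D, L] i) a) (cost e (![0, D, L] i) b))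
      (Finset.mem_univ i)).trans hMC
  have key : ∀ x, 0 ≤ x → min (cost e x a) (cost e x b) ≤ R + α →
      min |x - effLoc α a| |x - effLoc α b| ≤ R := fun x hx hm => by
    rw [cost_eq_effLoc hα hdef hx, cost_eq_effLoc hα hdef hx, min_add_add_right] at hm
    linarith
  have hRD : R < D := by nlinarith
  exact facility_between hRD hL (key 0 le_rfl (hi 0)) (key D hD0.le (hi 1)) (key L hL0.le (hi 2))

/-- Two-facility deterministic lower bound `2` for the maximum cost: with entrance fee
`1` at `1 - α` and `α` elsewhere, every strategyproof deterministic two-facility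
mechanism for three agents has, for each `ε ∈ (0,1)`, a profile on which its maximum
cost exceeds `2 - ε` times the optimum. -/
theorem two_facility_deterministic_max_cost_lower_bound (α : ℝ) (hα : 1 ≤ α)
    (e : ℝ → ℝ) (hdef : ∀ ℓ, e ℓ = if ℓ = 1 - α then 1 else α)
    (f : (Fin 3 → ℝ) → ℝ × ℝ)
    (hsp : ∀ (x : Fin 3 → ℝ) (i : Fin 3) (x' : ℝ),
      min (cost e (x i) (f x).1) (cost e (x i) (f x).2) ≤
      min (cost e (x i) (f (Function.update x i x')).1)
          (cost e (x i) (f (Function.update x i x')).2))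
    (ε : ℝ) (hε0 : 0 < ε) (hε1 : ε < 1) :
    ∃ x : Fin 3 → ℝ,
      (2 - ε) * (⨅ p : ℝ × ℝ, MC3 e x p.1 p.2) < MC3 e x (f x).1 (f x).2 := by
  by_contra! hcon
  have hεα : 0 < ε * α := by positivity
  -- `D` is chosen so that even `ε * D / 2 - (1 - ε) * α`, the lower bound on `y`, exceeds `2 α / ε`.
  obtain ⟨D, hD⟩ : ∃ D : ℝ, ε * D / 2 = 2 * α / ε + α :=
    ⟨2 * (2 * α / ε + α) / ε, by field_simp⟩
  have hT0 : 0 < 2 * α / ε := by positivity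
  have hT : ε * (2 * α / ε) = 2 * α := by field_simp
  have hD1 : 2 * α < ε * D := by
    have : 2 * α ≤ 2 * α / ε := by rw [le_div_iff₀ hε0]; nlinarith
    linarith
  have hD0 : 0 < D := by
    by_contra! h
    nlinarith
  have h1 := facility_between_of_ratio hα hdef hε0 hε1 hD1 hD0 le_rfl rfl
    (hcon ![0, D, 3 * D])
  obtain ⟨y, hy, hyT, hyD⟩ : ∃ y, (y = effLoc α (f ![0, D, 3 * D]).1 ∨
      y = effLoc α (f ![0, D, 3 * D]).2) ∧ 2 * α / ε < y ∧ y ≤ D := by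
    rcases h1 with ⟨h, h', -⟩ | ⟨h, h', -⟩
    · exact ⟨_, Or.inl rfl, by linarith, by linarith⟩
    · exact ⟨_, Or.inr rfl, by linarith, by linarith⟩
  have hy0 : 0 < y := hT0.trans hyT
  have hy1 : 2 * α < ε * y := by
    have := mul_lt_mul_of_pos_left hyT hε0
    linarith
  have h2 := facility_between_of_ratio hα hdef hε0 hε1 hy1 hy0
    (by linarith : 3 * y ≤ 3 * D) rfl (hcon ![0, y, 3 * D])
  have hsp' := hsp ![0, y, 3 * D] 1 D
  have hupd : Function.update ![0, y, 3 * D] 1 D = ![0, D, 3 * D] := by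
    ext i; fin_cases i <;> simp
  rw [hupd] at hsp'
  change min (cost e y _) (cost e y _) ≤ min (cost e y _) (cost e y _) at hsp'
  simp only [cost_eq_effLoc hα hdef hy0.le, min_add_add_right] at hsp'
  have hz : min |y - effLoc α (f ![0, D, 3 * D]).1| |y - effLoc α (f ![0, D, 3 * D]).2| ≤ 0 := by
    rcases hy with h | h
    · exact (min_le_left _ _).trans (by rw [← h]; simp)
    · exact (min_le_right _ _).trans (by rw [← h]; simp)
  -- Truthfulness forces a facility at `y` itself, which `h2` excludes.
  have hz' : min |y - effLoc α (f ![0, y, 3 * D]).1| |y - effLoc α (f ![0, y, 3 * D]).2| ≤ 0 := by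
    linarith
  rw [min_le_iff, abs_nonpos_iff, abs_nonpos_iff, sub_eq_zero, sub_eq_zero] at hz'
  rcases hz' with h | h <;> rw [← h] at h2 <;> rcases h2 with ⟨_, _, _⟩ | ⟨_, _, _⟩ <;> nlinarith
end
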